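/- Let R be a commutative ring, G a finite group, ψ : R → S a centralizing G-Galois extension, and ϱ : R → T a homomorphism of commutative rings. Then the base-changed extension ψ_T : T → T ⊗_R S, t ↦ t ⊗ 1, with G acting on T ⊗_R S by g·(t ⊗ s) = t ⊗ g(s), is a centralizing G-Galois extension; likewise the extension _Tψ : T → S ⊗_R T, t ↦ 1 ⊗ t, with G acting by g·(s ⊗ t) = g(s) ⊗ t, is a centralizing G-Galois extension. If moreover ψ is a G-Galois-Azumaya extension, then so are ψ_T and _Tψ. -/

import Mathlib

open scoped TensorProduct

namespace Nuss
noncomputable section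

variable {R : Type*} [CommRing R] {S : Type*} [Ring S] [Algebra R S]
variable {G : Type*} [Group G]

/-- The Galois map `Γ : S ⊗[R] S →ₗ[R] Map(G,S)`, `Γ(s ⊗ t)(g) = s⬝g(t)`, for a centralizing
extension, i.e. an `R`-algebra `S`, with `G` acting by `R`-algebra automorphisms. -/
def gammaAlg (act : G →* (S ≃ₐ[R] S)) : S ⊗[R] S →ₗ[R] (G → S) :=
  TensorProduct.lift <| LinearMap.mk₂ R (fun s t => fun g => s * act g t)
    (fun s s' t => by funext g; simp [add_mul])
    (fun c s t => by funext g; simp [Algebra.smul_mul_assoc])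
    (fun s t t' => by funext g; simp [map_add, mul_add])
    (fun c s t => by funext g; simp [map_smul, Algebra.mul_smul_comm])

@[simp] lemma gammaAlg_tmul (act : G →* (S ≃ₐ[R] S)) (s t : S) :
    gammaAlg act (s ⊗ₜ[R] t) = fun g => s * act g t := rfl

/-- The function `δ_e ∈ Map(G, S)`: `1` at the neutral element, `0` elsewhere. -/
def deltaE' (G S : Type*) [Group G] [Ring S] : G → S :=
  fun g => letI := Classical.decEq G; if g = 1 then 1 else 0

/-- A centralizing `G`-Galois extension: `S` is an `R`-algebra (so that the structure morphism
`ψ = algebraMap R S` lands in the centre of `S`), the finite group `G` acts on `S` by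
`R`-algebra automorphisms (equivalently, by ring automorphisms fixing `ψ(R)` pointwise),
`S` is a faithfully flat `R`-module via `ψ`, and the Galois map is bijective. -/
structure IsCentralizingGaloisExtension (G : Type*) [Group G] [Finite G]
    (R S : Type*) [CommRing R] [Ring S] [Algebra R S] (act : G →* (S ≃ₐ[R] S)) : Prop where
  faithfullyFlat : Module.FaithfullyFlat R S
  bijective : Function.Bijective (gammaAlg act)

/-- A central extension: the structure morphism maps `R` bijectively onto the centre of `S`. -/
def IsCentralExtension (R S : Type*) [CommRing R] [Ring S] [Algebra R S] : Prop :=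
  Function.Injective (algebraMap R S) ∧ (algebraMap R S).range = Subring.center S

/-- A separable extension: the multiplication `μ : S ⊗[R] S → S` splits as a morphism of
`S`-bimodules; equivalently there is a Casimir element `η` with `μ(η) = 1`. -/
def IsSeparableExtension (R S : Type*) [CommRing R] [Ring S] [Algebra R S] : Prop :=
  ∃ η : S ⊗[R] S, (∀ s : S, (s ⊗ₜ[R] (1 : S)) * η = η * ((1 : S) ⊗ₜ[R] s)) ∧
    LinearMap.mul' R S η = 1

/-- A `G`-Galois-Azumaya extension: a central `G`-Galois extension `R → S` such that `S` is
an Azumaya (central separable) `R`-algebra. -/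
def IsGaloisAzumayaExtension (G : Type*) [Group G] [Finite G]
    (R S : Type*) [CommRing R] [Ring S] [Algebra R S] (act : G →* (S ≃ₐ[R] S)) : Prop :=
  IsCentralizingGaloisExtension G R S act ∧ IsCentralExtension R S ∧ IsSeparableExtension R S

end
end Nuss

namespace Nuss
noncomputable section

section Helpers

variable {R : Type*} [CommRing R] {S : Type*} [Ring S] [Algebra R S]
variable {S' : Type*} [Ring S'] [Algebra R S']
variable {T : Type*} [CommRing T] [Algebra R T]
variable {G : Type*} [Group G]

/-- `a ⊗ b ↦ (x ↦ a x b)`. -/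
def sandwich (R S : Type*) [CommRing R] [Ring S] [Algebra R S] :
    S ⊗[R] S →ₗ[R] S →ₗ[R] S :=
  TensorProduct.lift <| LinearMap.mk₂ R
    (fun a b => (LinearMap.mulLeft R a).comp (LinearMap.mulRight R b))
    (fun s s' t => by ext x; simp [add_mul])
    (fun c s t => by ext x; simp)
    (fun s t t' => by ext x; simp [mul_add])
    (fun c s t => by ext x; simp)

lemma sandwich_tmul (a b x : S) : sandwich R S (a ⊗ₜ b) x = a * (x * b) := rfl

lemma sandwich_left (y : S) (η : S ⊗[R] S) (x : S) :
    sandwich R S ((y ⊗ₜ 1) * η) x = y * sandwich R S η x := by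
  induction η with
  | zero => simp
  | tmul a b => simp [sandwich_tmul, mul_assoc]
  | add a b ha hb => simp [mul_add, ha, hb]

lemma sandwich_right (y : S) (η : S ⊗[R] S) (x : S) :
    sandwich R S (η * (1 ⊗ₜ y)) x = sandwich R S η x * y := by
  induction η with
  | zero => simp
  | tmul a b => simp [sandwich_tmul, mul_assoc]
  | add a b ha hb => simp [add_mul, ha, hb]

lemma sandwich_central (z : S) (hz : z ∈ Subring.center S) (η : S ⊗[R] S) :
    sandwich R S η z = z * LinearMap.mul' R S η := by
  rw [Subring.mem_center_iff] at hz
  induction η with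
  | zero => simp
  | tmul a b => simp [sandwich_tmul, ← mul_assoc, hz]
  | add a b ha hb => simp [mul_add, ha, hb]

/-- `a ⊗ b ↦ (1 ⊗ a) ⊗ (1 ⊗ b)`. -/
def phi (R S T : Type*) [CommRing R] [Ring S] [Algebra R S] [CommRing T] [Algebra R T] :
    S ⊗[R] S →ₐ[R] (T ⊗[R] S) ⊗[T] (T ⊗[R] S) :=
  Algebra.TensorProduct.lift
    (((Algebra.TensorProduct.includeLeft :
        (T ⊗[R] S) →ₐ[T] (T ⊗[R] S) ⊗[T] (T ⊗[R] S)).restrictScalars R).comp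
      Algebra.TensorProduct.includeRight)
    (((Algebra.TensorProduct.includeRight :
        (T ⊗[R] S) →ₐ[T] (T ⊗[R] S) ⊗[T] (T ⊗[R] S)).restrictScalars R).comp
      Algebra.TensorProduct.includeRight)
    (fun x y => (commute_iff_eq _ _).2 (by simp))

lemma phi_tmul (a b : S) :
    phi R S T (a ⊗ₜ b) = ((1 : T) ⊗ₜ[R] a) ⊗ₜ[T] ((1 : T) ⊗ₜ[R] b) := by
  refine (Algebra.TensorProduct.lift_tmul _ _ _ a b).trans ?_
  simp

lemma mul'_phi (η : S ⊗[R] S) :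
    LinearMap.mul' T (T ⊗[R] S) (phi R S T η) = 1 ⊗ₜ LinearMap.mul' R S η := by
  induction η with
  | zero => simp
  | tmul a b => simp [phi_tmul]
  | add a b ha hb => simp [TensorProduct.tmul_add, ha, hb]

lemma sandwich_phi (η : S ⊗[R] S) (t : T) (s : S) :
    sandwich T (T ⊗[R] S) (phi R S T η) (t ⊗ₜ s) = t ⊗ₜ sandwich R S η s := by
  induction η with
  | zero => simp
  | tmul a b => simp [phi_tmul, sandwich_tmul]
  | add a b ha hb => simp [TensorProduct.tmul_add, ha, hb]

lemma casimir_phi (η : S ⊗[R] S) (h : ∀ s : S, (s ⊗ₜ[R] (1 : S)) * η = η * ((1 : S) ⊗ₜ[R] s))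
    (x : T ⊗[R] S) :
    (x ⊗ₜ[T] (1 : T ⊗[R] S)) * phi R S T η = phi R S T η * ((1 : T ⊗[R] S) ⊗ₜ[T] x) := by
  induction x with
  | zero => simp
  | add a b ha hb => simp [TensorProduct.tmul_add, TensorProduct.add_tmul, add_mul, mul_add, ha, hb]
  | tmul t s =>
    have e : (t ⊗ₜ[R] s : T ⊗[R] S) = t • ((1 : T) ⊗ₜ[R] s) := by
      simp [TensorProduct.smul_tmul']
    have h1 : ((1 : T) ⊗ₜ[R] s) ⊗ₜ[T] (1 : T ⊗[R] S) = phi R S T (s ⊗ₜ 1) := by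
      rw [phi_tmul]; rfl
    have h2 : (1 : T ⊗[R] S) ⊗ₜ[T] ((1 : T) ⊗ₜ[R] s) = phi R S T (1 ⊗ₜ s) := by
      rw [phi_tmul]; rfl
    rw [e, TensorProduct.tmul_smul, ← TensorProduct.smul_tmul', smul_mul_assoc, mul_smul_comm,
      h1, h2, ← map_mul, ← map_mul, h]

lemma azumaya_baseChange (hff : Module.FaithfullyFlat T (T ⊗[R] S))
    (hc : IsCentralExtension R S) (hs : IsSeparableExtension R S) :
    IsCentralExtension T (T ⊗[R] S) ∧ IsSeparableExtension T (T ⊗[R] S) := by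
  obtain ⟨η, h1, h2⟩ := hs
  have hm : LinearMap.mul' T (T ⊗[R] S) (phi R S T η) = 1 := by
    rw [mul'_phi, h2]; rfl
  have hcas := casimir_phi (T := T) η h1
  refine ⟨⟨?_, ?_⟩, phi R S T η, hcas, hm⟩
  · rw [injective_iff_map_eq_zero]
    intro t ht
    have h3 := (Module.FaithfullyFlat.one_tmul_eq_zero_iff T T (A := T ⊗[R] S) t).1
    apply h3
    rw [← mul_one t, ← smul_eq_mul, TensorProduct.tmul_smul, TensorProduct.smul_tmul',
      ← Algebra.algebraMap_eq_smul_one, ht, TensorProduct.zero_tmul]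
  · apply le_antisymm
    · rintro _ ⟨t, rfl⟩
      rw [Subring.mem_center_iff]
      exact fun g => (Algebra.commutes t g).symm
    · intro z hz
      have hz' : sandwich T (T ⊗[R] S) (phi R S T η) z = z := by
        rw [sandwich_central z hz, hm, mul_one]
      rw [← hz']
      clear hz hz'
      induction z with
      | zero => simp
      | add a b ha hb => rw [map_add]; exact add_mem ha hb
      | tmul t s =>
        rw [sandwich_phi]
        have : sandwich R S η s ∈ Subring.center S := by
          rw [Subring.mem_center_iff]
          intro y
          rw [← sandwich_left, ← sandwich_right, h1]
        rw [← hc.2] at this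
        obtain ⟨r, hr⟩ := this
        refine ⟨r • t, ?_⟩
        rw [← hr, Algebra.TensorProduct.algebraMap_apply, Algebra.algebraMap_eq_smul_one r,
          TensorProduct.tmul_smul, TensorProduct.smul_tmul']
        rfl

lemma galois_baseChange [Finite G] (act : G →* (S ≃ₐ[R] S))
    (hGal : IsCentralizingGaloisExtension G R S act)
    (actL : G →* ((T ⊗[R] S) ≃ₐ[T] (T ⊗[R] S)))
    (hactL : ∀ (g : G) (t : T) (s : S), actL g (t ⊗ₜ[R] s) = t ⊗ₜ[R] (act g s)) :
    IsCentralizingGaloisExtension G T (T ⊗[R] S) actL := by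
  classical
  have := Fintype.ofFinite G
  have := hGal.faithfullyFlat
  refine ⟨inferInstance, ?_⟩
  let e0 : (S ⊗[R] S) ≃ₗ[R] (G → S) := LinearEquiv.ofBijective _ hGal.bijective
  let e : (T ⊗[R] S) ⊗[T] (T ⊗[R] S) ≃ₗ[T] (G → T ⊗[R] S) :=
    (TensorProduct.AlgebraTensorModule.distribBaseChange R T S S).symm ≪≫ₗ
      e0.baseChange R T _ _ ≪≫ₗ TensorProduct.piRight R T T (fun _ : G => S)
  have he : gammaAlg actL = e.toLinearMap := by
    ext a b g
    simp [e, e0, hactL]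
  rw [he]
  exact e.bijective

lemma galois_transfer [Finite G] (e : S ≃ₐ[R] S') (act : G →* (S ≃ₐ[R] S))
    (act' : G →* (S' ≃ₐ[R] S')) (h : ∀ g s, act' g (e s) = e (act g s))
    (hGal : IsCentralizingGaloisExtension G R S act) :
    IsCentralizingGaloisExtension G R S' act' := by
  have := hGal.faithfullyFlat
  refine ⟨Module.FaithfullyFlat.of_linearEquiv _ _ e.symm.toLinearEquiv, ?_⟩
  have hc : gammaAlg act' ∘ (TensorProduct.congr e.toLinearEquiv e.toLinearEquiv) =
      (Equiv.piCongrRight fun _ : G => e.toEquiv) ∘ gammaAlg act := by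
    funext x
    induction x with
    | zero => funext g; simp
    | tmul a b => funext g; simp [h]
    | add a b ha hb =>
      funext g
      have ha := congrFun ha g
      have hb := congrFun hb g
      simp at ha hb ⊢
      rw [ha, hb]
  have h2 : Function.Bijective
      (gammaAlg act' ∘ (TensorProduct.congr e.toLinearEquiv e.toLinearEquiv)) := by
    rw [hc]
    exact (Equiv.bijective _).comp hGal.bijective
  exact (Function.Bijective.of_comp_iff _ (LinearEquiv.bijective _)).1 h2

lemma central_transfer (e : S ≃ₐ[R] S') (h : IsCentralExtension R S) :
    IsCentralExtension R S' := by
  have hm (r : R) : algebraMap R S' r = e (algebraMap R S r) := (e.commutes r).symm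
  refine ⟨fun a b hab => h.1 (e.injective (by rw [← hm, ← hm, hab])), ?_⟩
  apply le_antisymm
  · rintro _ ⟨t, rfl⟩
    rw [Subring.mem_center_iff]
    exact fun g => (Algebra.commutes t g).symm
  · intro z hz
    rw [Subring.mem_center_iff] at hz
    have : e.symm z ∈ Subring.center S := by
      rw [Subring.mem_center_iff]
      intro g
      apply e.injective
      simpa using hz (e g)
    rw [← h.2] at this
    obtain ⟨r, hr⟩ := this
    exact ⟨r, by rw [hm, hr, e.apply_symm_apply]⟩

lemma separable_transfer (e : S ≃ₐ[R] S') (h : IsSeparableExtension R S) :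
    IsSeparableExtension R S' := by
  obtain ⟨η, h1, h2⟩ := h
  refine ⟨Algebra.TensorProduct.congr e e η, fun s => ?_, ?_⟩
  · have := congrArg (Algebra.TensorProduct.congr e e) (h1 (e.symm s))
    simpa only [map_mul, Algebra.TensorProduct.congr_apply, Algebra.TensorProduct.map_tmul,
      AlgEquiv.coe_toAlgHom, AlgHom.coe_coe, AlgEquiv.apply_symm_apply, map_one] using this
  · have : ∀ η, LinearMap.mul' R S' (Algebra.TensorProduct.congr e e η)
        = e (LinearMap.mul' R S η) := by
      intro η
      induction η with
      | zero => simp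
      | tmul a b => simp
      | add a b ha hb => simp only [map_add, ha, hb]
    rw [this, h2, map_one]

end Helpers

/-- Let `R` be a commutative ring, `ψ : R → S` a centralizing `G`-Galois
extension and `ϱ : R → T` a homomorphism of commutative rings.  Then the base-changed
extensions `ψ_T : T → T ⊗_R S` (with `G` acting by `g⬝(t ⊗ s) = t ⊗ g(s)`) and
`_Tψ : T → S ⊗_R T` (with `G` acting by `g⬝(s ⊗ t) = g(s) ⊗ t`) are centralizing
`G`-Galois extensions; if moreover `ψ` is a `G`-Galois-Azumaya extension, then so are
`ψ_T` and `_Tψ`. -/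
theorem baseChange_isGalois
    {R : Type*} [CommRing R] {S : Type*} [Ring S] [Algebra R S]
    {T : Type*} [CommRing T] [Algebra R T]
    {G : Type*} [Group G] [Finite G]
    (act : G →* (S ≃ₐ[R] S))
    (hGal : IsCentralizingGaloisExtension G R S act)
    (actL : G →* ((T ⊗[R] S) ≃ₐ[T] (T ⊗[R] S)))
    (hactL : ∀ (g : G) (t : T) (s : S), actL g (t ⊗ₜ[R] s) = t ⊗ₜ[R] (act g s)) :
    (IsCentralizingGaloisExtension G T (T ⊗[R] S) actL ∧
      (IsGaloisAzumayaExtension G R S act →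
        IsGaloisAzumayaExtension G T (T ⊗[R] S) actL)) ∧
    (letI : Algebra T (S ⊗[R] T) := Algebra.TensorProduct.rightAlgebra
     ∀ (actR : G →* ((S ⊗[R] T) ≃ₐ[T] (S ⊗[R] T))),
      (∀ (g : G) (s : S) (t : T), actR g (s ⊗ₜ[R] t) = (act g s) ⊗ₜ[R] t) →
      (IsCentralizingGaloisExtension G T (S ⊗[R] T) actR ∧
        (IsGaloisAzumayaExtension G R S act →
          IsGaloisAzumayaExtension G T (S ⊗[R] T) actR))) := by
  have hL := galois_baseChange act hGal actL hactL
  refine ⟨⟨hL, fun h => ⟨hL, azumaya_baseChange hL.faithfullyFlat h.2.1 h.2.2⟩⟩, ?_⟩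
  letI : Algebra T (S ⊗[R] T) := Algebra.TensorProduct.rightAlgebra
  intro actR hactR
  have hR := galois_transfer (Algebra.TensorProduct.commRight R T S) actL actR (by
    intro g x
    induction x with
    | zero => simp
    | tmul t s =>
      rw [hactL, Algebra.TensorProduct.commRight_tmul, Algebra.TensorProduct.commRight_tmul, hactR]
    | add a b ha hb => simp only [map_add, ha, hb]) hL
  refine ⟨hR, fun h => ⟨hR, ?_⟩⟩
  have := azumaya_baseChange hL.faithfullyFlat h.2.1 h.2.2
  exact ⟨central_transfer (Algebra.TensorProduct.commRight R T S) this.1,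
    separable_transfer (Algebra.TensorProduct.commRight R T S) this.2⟩

end
end Nuss
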